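/- arXiv:1611.06454 — 3 statements merged into one kernel-verified Lean document; each statement's English description precedes it below -/
import Mathlib

section
/- The algebra 𝔷₁^ℂ degenerates to 𝔑₉(1/2): the structure λ with table e₁e₂ = e₄, e₂e₁ = (1/2)e₄, e₂e₂ = e₃ lies in the closure of the GL(V)-orbit of the structure μ with table e₁e₁ = e₂, e₁e₂ = (1/2)e₃, e₂e₁ = e₃. -/
noncomputable section

/-- `V = ℂ⁴`. -/
abbrev V : Type := Fin 4 → ℂ

/-- The standard basis vectors `e₁, e₂, e₃, e₄` of `V` (indexed by `0, 1, 2, 3`). -/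
def e (i : Fin 4) : V := Pi.single i 1

/-- The `GL(V)`-orbit `O(μ)` of an algebra structure `μ` on `V`, for the action
`(g • μ)(x, y) = g (μ (g⁻¹ x) (g⁻¹ y))`. -/
def orbit (μ : V →L[ℂ] V →L[ℂ] V) : Set (V →L[ℂ] V →L[ℂ] V) :=
  {ν | ∃ g : V ≃L[ℂ] V, ∀ x y : V, ν x y = g (μ (g.symm x) (g.symm y))}

def kap : V →L[ℂ] V →L[ℂ] V :=
  (ContinuousLinearMap.proj (R := ℂ) (φ := fun _ : Fin 4 => ℂ) 2).smulRight
      ((ContinuousLinearMap.proj (R := ℂ) (φ := fun _ : Fin 4 => ℂ) 1).smulRight (e 3)) +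
  (ContinuousLinearMap.proj (R := ℂ) (φ := fun _ : Fin 4 => ℂ) 1).smulRight
      ((ContinuousLinearMap.proj (R := ℂ) (φ := fun _ : Fin 4 => ℂ) 2).smulRight
        ((1/2 : ℂ) • e 3))

def gInv (t : ℂ) (ht : t ≠ 0) : V ≃ₗ[ℂ] V where
  toFun y := ![y 3, y 0 / t, (y 1 - y 3) / t ^ 2, y 2 / t]
  invFun x := ![t * x 1, x 0 + t ^ 2 * x 2, t * x 3, x 0]
  map_add' x y := by
    funext i; fin_cases i <;> simp <;> ring
  map_smul' c x := by
    funext i; fin_cases i <;> simp <;> ring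
  left_inv x := by
    funext i; fin_cases i <;> simp <;> field_simp <;> ring
  right_inv x := by
    funext i; fin_cases i <;> simp <;> field_simp

lemma expand (x : V) : x = x 0 • e 0 + x 1 • e 1 + x 2 • e 2 + x 3 • e 3 := by
  funext i; fin_cases i <;> simp [e]

lemma bil (ν : V →L[ℂ] V →L[ℂ] V) (x y : V) :
    ν x y = ∑ i, ∑ j, (x i * y j) • ν (e i) (e j) := by
  conv_lhs => rw [expand x, expand y]
  simp only [map_add, map_smul, ContinuousLinearMap.add_apply, ContinuousLinearMap.smul_apply,
    Fin.sum_univ_four, smul_add, smul_smul]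
  module

lemma kap_apply (x y : V) : kap x y = (x 2) • (y 1) • e 3 + (x 1) • (y 2) • (1/2 : ℂ) • e 3 := rfl

lemma tend {E : Type*} [NormedAddCommGroup E] [NormedSpace ℂ E] (a b : E) :
    Filter.Tendsto (fun t : ℂ => a + t ^ 2 • b) (nhdsWithin 0 {0}ᶜ) (nhds a) := by
  have hc : Continuous (fun t : ℂ => a + t ^ 2 • b) := by fun_prop
  have h0 := hc.tendsto 0
  simp only [ne_eq, OfNat.ofNat_ne_zero, not_false_eq_true, zero_pow, zero_smul, add_zero] at h0
  exact h0.mono_left nhdsWithin_le_nhds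

/-- 𝔷₁^ℂ (e₁e₁ = e₂, e₁e₂ = ½e₃, e₂e₁ = e₃) degenerates to 𝔑₉(1/2) (e₁e₂ = e₄, e₂e₁ = ½e₄, e₂e₂ = e₃). -/
theorem stmt6 (μ lam : V →L[ℂ] V →L[ℂ] V)
    (hμ : ∀ i j : Fin 4, μ (e i) (e j) =
    (![
      ![e 1, (1/2 : ℂ) • e 2, 0, 0],
      ![e 2, 0, 0, 0],
      ![0, 0, 0, 0],
      ![0, 0, 0, 0]
     ] : Fin 4 → Fin 4 → V) i j)
    (hlam : ∀ i j : Fin 4, lam (e i) (e j) =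
    (![
      ![0, e 3, 0, 0],
      ![(1/2 : ℂ) • e 3, e 2, 0, 0],
      ![0, 0, 0, 0],
      ![0, 0, 0, 0]
     ] : Fin 4 → Fin 4 → V) i j) :
    lam ∈ closure (orbit μ) := by
  have hm : ∀ x y : V, μ x y = ![0, x 0 * y 0, 1/2 * (x 0 * y 1) + x 1 * y 0, 0] := by
    intro x y
    rw [bil]
    simp only [hμ, Fin.sum_univ_four]
    funext i; fin_cases i <;> simp [e] <;> ring
  have hl : ∀ x y : V, lam x y = ![0, 0, x 1 * y 1, x 0 * y 1 + 1/2 * (x 1 * y 0)] := by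
    intro x y
    rw [bil]
    simp only [hlam, Fin.sum_univ_four]
    funext i; fin_cases i <;> simp [e] <;> ring
  have hT : Filter.Tendsto (fun t : ℂ => lam + t ^ 2 • kap) (nhdsWithin 0 {0}ᶜ) (nhds lam) := tend lam kap
  refine mem_closure_of_tendsto hT ?_
  filter_upwards [self_mem_nhdsWithin] with t ht
  have ht' : t ≠ 0 := ht
  refine ⟨(gInv t ht').toContinuousLinearEquiv, fun x y => ?_⟩
  have h1 : ∀ z, (gInv t ht').toContinuousLinearEquiv z =
      ![z 3, z 0 / t, (z 1 - z 3) / t ^ 2, z 2 / t] := fun z => rfl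
  have h2 : ∀ z, (gInv t ht').toContinuousLinearEquiv.symm z =
      ![t * z 1, z 0 + t ^ 2 * z 2, t * z 3, z 0] := fun z => rfl
  have h3 : (lam + t ^ 2 • kap) x y = lam x y + t ^ 2 • kap x y := rfl
  rw [h1, hm, h2, h2]
  refine h3.trans ?_
  rw [hl, kap_apply]
  funext i; fin_cases i <;> simp [e] <;> field_simp <;> ring
end
end

section
/- The algebra 𝔷₁ degenerates to 𝔷₂: the structure λ with table e₁e₁ = e₃, e₁e₂ = e₄, e₁e₃ = e₄, e₃e₁ = 2e₄ lies in the closure of the GL(V)-orbit of the structure μ with table e₁e₁ = e₂, e₁e₂ = e₃, e₁e₃ = e₄, e₂e₁ = 2e₃, e₂e₂ = 3e₄, e₃e₁ = 3e₄. -/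
noncomputable section

set_option synthInstance.maxHeartbeats 400000
set_option maxHeartbeats 1000000

lemma cont_aux {W : Type} [NormedAddCommGroup W] [NormedSpace ℂ W] (a b c : W) :
    Continuous fun t : ℂ => a + t ^ 3 • b + t ^ 6 • c := by
  fun_prop

lemma zero_aux {W : Type} [NormedAddCommGroup W] [NormedSpace ℂ W] (a b c : W) :
    a + (0 : ℂ) ^ 3 • b + (0 : ℂ) ^ 6 • c = a := by
  simp

/-- rank one bilinear map -/
def bb (i j : Fin 4) (v : V) : V →L[ℂ] V →L[ℂ] V :=
  (ContinuousLinearMap.proj (R := ℂ) (φ := fun _ : Fin 4 => ℂ) i).smulRight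
    ((ContinuousLinearMap.proj (R := ℂ) (φ := fun _ : Fin 4 => ℂ) j).smulRight v)

lemma bb_apply (i j : Fin 4) (v x y : V) : bb i j v x y = (x i * y j) • v := by
  simp [bb, mul_smul]

def qq (v : V) : V →L[ℂ] V →L[ℂ] V :=
  bb 0 3 v + (27 : ℂ) • bb 1 1 v + (9 : ℂ) • bb 1 2 v + (9 : ℂ) • bb 2 1 v
    + (3 : ℂ) • bb 2 2 v + (3 : ℂ) • bb 3 0 v

def ww : V := ![0, 2, -6, 0]

def PP : V →L[ℂ] V →L[ℂ] V := bb 0 1 ww + (3 : ℂ) • bb 1 0 ww + qq ![0, 0, 0, -2]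

def gg (t : ℂ) (ht : t ≠ 0) : V ≃L[ℂ] V :=
  LinearEquiv.toContinuousLinearEquiv
  { toFun := fun y => ![y 0 / t, 2 * t ^ 2 * y 3, y 1 / t ^ 2 - 6 * t ^ 2 * y 3,
      (y 2 - 2 * t ^ 2 * y 3) / t ^ 3]
    invFun := fun x => ![t * x 0, 3 * t ^ 2 * x 1 + t ^ 2 * x 2, x 1 + t ^ 3 * x 3,
      x 1 / (2 * t ^ 2)]
    map_add' := by
      intro x y
      funext k
      fin_cases k <;> simp <;> ring
    map_smul' := by
      intro c x
      funext k
      fin_cases k <;> simp <;> ring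
    left_inv := by
      intro x
      funext k
      fin_cases k <;> simp <;> field_simp <;> ring
    right_inv := by
      intro x
      funext k
      fin_cases k <;> simp <;> field_simp <;> ring }

lemma gg_apply (t : ℂ) (ht : t ≠ 0) (y : V) : gg t ht y =
    ![y 0 / t, 2 * t ^ 2 * y 3, y 1 / t ^ 2 - 6 * t ^ 2 * y 3,
      (y 2 - 2 * t ^ 2 * y 3) / t ^ 3] := rfl

lemma gg_symm_apply (t : ℂ) (ht : t ≠ 0) (x : V) : (gg t ht).symm x =
    ![t * x 0, 3 * t ^ 2 * x 1 + t ^ 2 * x 2, x 1 + t ^ 3 * x 3, x 1 / (2 * t ^ 2)] := rfl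

/-- 𝔷₁ degenerates to 𝔷₂. -/
theorem stmt7 (μ lam : V →L[ℂ] V →L[ℂ] V)
    (hμ : ∀ i j : Fin 4, μ (e i) (e j) =
    (![
      ![e 1, e 2, e 3, 0],
      ![(2 : ℂ) • e 2, (3 : ℂ) • e 3, 0, 0],
      ![(3 : ℂ) • e 3, 0, 0, 0],
      ![0, 0, 0, 0]
     ] : Fin 4 → Fin 4 → V) i j)
    (hlam : ∀ i j : Fin 4, lam (e i) (e j) =
    (![
      ![e 2, e 3, e 3, 0],
      ![0, 0, 0, 0],
      ![(2 : ℂ) • e 3, 0, 0, 0],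
      ![0, 0, 0, 0]
     ] : Fin 4 → Fin 4 → V) i j) :
    lam ∈ closure (orbit μ) := by
  have Hμ : ∀ x y : V, μ x y = ![0, x 0 * y 0, x 0 * y 1 + 2 * x 1 * y 0,
      x 0 * y 2 + 3 * x 1 * y 1 + 3 * x 2 * y 0] := by
    intro x y
    conv_lhs => rw [expand x, expand y]
    simp only [map_add, map_smul, _root_.add_apply, _root_.smul_apply, hμ]
    funext k
    fin_cases k <;> simp [e] <;> ring
  have Hl : ∀ x y : V, lam x y = ![0, 0, x 0 * y 0,
      x 0 * y 1 + x 0 * y 2 + 2 * x 2 * y 0] := by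
    intro x y
    conv_lhs => rw [expand x, expand y]
    simp only [map_add, map_smul, _root_.add_apply, _root_.smul_apply, hlam]
    funext k
    fin_cases k <;> simp [e] <;> ring
  let F : ℂ → (V →L[ℂ] V →L[ℂ] V) := fun t => lam + t ^ 3 • PP + t ^ 6 • qq ww
  have hF : Continuous F := by
    exact cont_aux lam PP (qq ww)
  have h0 : F 0 = lam := zero_aux lam PP (qq ww)
  have hT : Filter.Tendsto F (nhdsWithin 0 {0}ᶜ) (nhds lam) := by
    have := hF.tendsto 0
    rw [h0] at this
    exact this.mono_left nhdsWithin_le_nhds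
  refine mem_closure_of_tendsto hT ?_
  filter_upwards [self_mem_nhdsWithin] with t ht
  have ht' : t ≠ 0 := ht
  refine ⟨gg t ht', fun x y => ?_⟩
  rw [gg_apply, Hμ, gg_symm_apply, gg_symm_apply]
  simp only [F, _root_.add_apply, _root_.smul_apply, PP, qq, bb_apply, Hl]
  funext k
  fin_cases k <;> simp [ww] <;> field_simp <;> ring
end
end

section
/- The algebra 𝔷₅ degenerates to 𝔷₄: the structure λ with table e₁e₂ = e₃, e₁e₃ = e₄, e₂e₁ = −e₃ lies in the closure of the GL(V)-orbit of the structure μ with table e₁e₂ = e₃, e₁e₃ = e₄, e₂e₁ = −e₃, e₂e₂ = e₄. -/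
noncomputable section

lemma tendsto_aux {E : Type*} [NormedAddCommGroup E] [NormedSpace ℂ E]
    (a b : E) :
    Filter.Tendsto (fun t : ℂ => a + t • (b - a)) (nhdsWithin 0 {0}ᶜ) (nhds a) := by
  have hc : Continuous (fun t : ℂ => a + t • (b - a)) :=
    continuous_const.add (continuous_id.smul continuous_const)
  have h := (hc.tendsto 0).mono_left (nhdsWithin_le_nhds (s := {0}ᶜ))
  simpa using h

/-- The diagonal automorphism `diag(1, t⁻¹, t⁻¹, t⁻¹)`. -/
def gt (t : ℂ) (ht : t ≠ 0) : V ≃ₗ[ℂ] V where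
  toFun x := ![x 0, t⁻¹ * x 1, t⁻¹ * x 2, t⁻¹ * x 3]
  invFun x := ![x 0, t * x 1, t * x 2, t * x 3]
  map_add' x y := by ext i; fin_cases i <;> simp [mul_add]
  map_smul' c x := by ext i; fin_cases i <;> simp [mul_left_comm]
  left_inv x := by ext i; fin_cases i <;> simp [ht]
  right_inv x := by ext i; fin_cases i <;> simp [ht]

/-- 𝔷₅ degenerates to 𝔷₄. -/
theorem stmt9 (μ lam : V →L[ℂ] V →L[ℂ] V)
    (hμ : ∀ i j : Fin 4, μ (e i) (e j) =
    (![
      ![0, e 2, e 3, 0],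
      ![-e 2, e 3, 0, 0],
      ![0, 0, 0, 0],
      ![0, 0, 0, 0]
     ] : Fin 4 → Fin 4 → V) i j)
    (hlam : ∀ i j : Fin 4, lam (e i) (e j) =
    (![
      ![0, e 2, e 3, 0],
      ![-e 2, 0, 0, 0],
      ![0, 0, 0, 0],
      ![0, 0, 0, 0]
     ] : Fin 4 → Fin 4 → V) i j) :
    lam ∈ closure (orbit μ) := by
  have hm : ∀ x y : V, μ x y = ![0, 0, x 0 * y 1 - x 1 * y 0, x 0 * y 2 + x 1 * y 1] := by
    intro x y
    conv_lhs => rw [expand x, expand y]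
    simp only [map_add, map_smul, ContinuousLinearMap.add_apply,
      ContinuousLinearMap.smul_apply, hμ]
    ext i
    fin_cases i <;> simp [e, Pi.single_apply] <;> ring
  have hl : ∀ x y : V, lam x y = ![0, 0, x 0 * y 1 - x 1 * y 0, x 0 * y 2] := by
    intro x y
    conv_lhs => rw [expand x, expand y]
    simp only [map_add, map_smul, ContinuousLinearMap.add_apply,
      ContinuousLinearMap.smul_apply, hlam]
    ext i
    fin_cases i <;> simp [e, Pi.single_apply] <;> ring
  have ht := tendsto_aux (E := V →L[ℂ] V →L[ℂ] V) lam μ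
  refine mem_closure_of_tendsto ht ?_
  filter_upwards [self_mem_nhdsWithin] with t ht0
  have ht0 : t ≠ 0 := ht0
  refine ⟨(gt t ht0).toContinuousLinearEquiv, fun x y => ?_⟩
  change lam x y + t • (μ x y - lam x y) = gt t ht0 (μ ((gt t ht0).symm x) ((gt t ht0).symm y))
  rw [hm, hm, hl]
  ext i
  fin_cases i <;> simp [gt] <;> field_simp
end
end
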